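/- Rainich's maxwellian structure theorem (flat case): let U be a smooth field of unitary 2-forms on ℝ⁴ (tr(Û∘Û) = 2 and tr(Û∘(*U)̂) = 0 pointwise), and define the 1-form fields Φ := i(δU)U − i(δ*U)*U and Ψ := −i(δU)*U − i(δ*U)U. Assume Φ and Ψ are closed, i.e. (D_uΦ)(x)(v) = (D_vΦ)(x)(u) and (D_uΨ)(x)(v) = (D_vΨ)(x)(u) for all x, u, v. Then there exist smooth functions φ, ψ : ℝ⁴ → ℝ with Dφ = Φ and Dψ = Ψ, and for any such φ, ψ the 2-form field F := e^φ·(cos ψ · U + sin ψ · *U) satisfies the source-free Maxwell equations δF = 0 and δ*F = 0 on ℝ⁴. -/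

import Mathlib

open Matrix Real

/-- Spacetime `ℝ⁴` with the standard basis. -/
abbrev V4 : Type := Fin 4 → ℝ

/-- `4×4` real matrices: components of bilinear forms / endomorphisms of `ℝ⁴`
in the standard basis `(e₀,e₁,e₂,e₃)`. -/
abbrev Mat4 : Type := Matrix (Fin 4) (Fin 4) ℝ

/-- The Minkowski metric `diag(-1,1,1,1)` (it equals its own inverse). -/
noncomputable def ηm : Mat4 := Matrix.diagonal ![-1, 1, 1, 1]

/-- The Minkowski bilinear form `η(x,y) = -x₀y₀ + x₁y₁ + x₂y₂ + x₃y₃`. -/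
noncomputable def ηb (x y : V4) : ℝ := x ⬝ᵥ ηm *ᵥ y

/-- A vector `x` is timelike if `η(x,x) < 0`. -/
noncomputable def Timelike (x : V4) : Prop := ηb x x < 0

/-- Evaluation of the bilinear form with component matrix `B`:
`B(x,y) = Σ xᵅ B_{αβ} yᵝ`. -/
noncomputable def bil (B : Mat4) (x y : V4) : ℝ := x ⬝ᵥ B *ᵥ y

/-- A 2-form is a skew-symmetric bilinear form. -/
noncomputable def IsTwoForm (B : Mat4) : Prop := Bᵀ = -B

/-- The endomorphism `B̂` associated with the bilinear form `B`, i.e. the unique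
endomorphism with `η(B̂x, y) = B(x,y)` for all `x, y`.  (Indeed
`ηb (hat B *ᵥ x) y = bil B x y`.) -/
noncomputable def hat (B : Mat4) : Mat4 := ηm * Bᵀ

/-- The totally antisymmetric Levi-Civita symbol on four indices, `ε₀₁₂₃ = 1`. -/
noncomputable def lc (a b c d : Fin 4) : ℝ :=
  (((b : ℕ) : ℝ) - ((a : ℕ) : ℝ)) * (((c : ℕ) : ℝ) - ((a : ℕ) : ℝ)) *
    (((d : ℕ) : ℝ) - ((a : ℕ) : ℝ)) * (((c : ℕ) : ℝ) - ((b : ℕ) : ℝ)) *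
    (((d : ℕ) : ℝ) - ((b : ℕ) : ℝ)) * (((d : ℕ) : ℝ) - ((c : ℕ) : ℝ)) / 12

/-- The Hodge dual of a 2-form:
`(*F)(e_α,e_β) = (1/2) Σ ε_{αβγδ} η^{γμ} η^{δν} F(e_μ,e_ν)`. -/
noncomputable def hodge (F : Mat4) : Mat4 :=
  Matrix.of fun α β => (1/2) * ∑ γ, ∑ δ, ∑ μ, ∑ ν, lc α β γ δ * ηm γ μ * ηm δ ν * F μ ν

/-- A unitary 2-form: `tr(Û∘Û) = 2` and `tr(Û∘(*U)̂) = 0`. -/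
noncomputable def IsUnitary (U : Mat4) : Prop :=
  IsTwoForm U ∧ (hat U * hat U).trace = 2 ∧ (hat U * hat (hodge U)).trace = 0

/-- An endomorphism `L` is η-self-adjoint if `η(Lx,y) = η(x,Ly)` for all `x, y`. -/
noncomputable def SelfAdj (L : Mat4) : Prop := ∀ x y : V4, ηb (L *ᵥ x) y = ηb x (L *ᵥ y)

/-- The standard basis vector `e_i` of `ℝ⁴`. -/
noncomputable def e (i : Fin 4) : V4 := Pi.single i 1

/-- The directional derivative `(D_u A)(x)` of a bilinear-form-valued field `A`
at the point `x` in the direction `u` (computed entrywise). -/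
noncomputable def Dd (A : V4 → Mat4) (x u : V4) : Mat4 :=
  Matrix.of fun i j => fderiv ℝ (fun y => A y i j) x u

/-- A smooth 2-form field: a smooth map from `ℝ⁴` to the space of
skew-symmetric bilinear forms on `ℝ⁴`. -/
noncomputable def SmoothTwoFormField (A : V4 → Mat4) : Prop :=
  (∀ x, (A x)ᵀ = -(A x)) ∧ ∀ i j, ContDiff ℝ (⊤ : ℕ∞) (fun x => A x i j)

/-- The flat Killing–Yano equation: `(D_uA)(x)(v,z) + (D_vA)(x)(u,z) = 0`. -/
noncomputable def FlatKY (A : V4 → Mat4) : Prop :=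
  ∀ x u v z : V4, bil (Dd A x u) v z + bil (Dd A x v) u z = 0

/-- The codifferential `(δA)(x)(z) = -Σ η^{αβ} (D_{e_α}A)(x)(e_β, z)`. -/
noncomputable def codiff (A : V4 → Mat4) (x z : V4) : ℝ :=
  -∑ α, ∑ β, ηm α β * bil (Dd A x (e α)) (e β) z

/-- The exterior derivative
`(dA)(x)(u,v,w) = (D_uA)(x)(v,w) + (D_vA)(x)(w,u) + (D_wA)(x)(u,v)`. -/
noncomputable def extd (A : V4 → Mat4) (x u v w : V4) : ℝ :=
  bil (Dd A x u) v w + bil (Dd A x v) w u + bil (Dd A x w) u v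

/-- The flat conformal Killing–Yano equation:
`(D_uA)(x)(v,z) + (D_vA)(x)(u,z) = 2η(u,v)a(x)(z) - a(x)(u)η(v,z) - a(x)(v)η(u,z)`
with `a = -(1/3)δA`. -/
noncomputable def FlatCKY (A : V4 → Mat4) : Prop :=
  ∀ x u v z : V4, bil (Dd A x u) v z + bil (Dd A x v) u z =
    2 * ηb u v * (-(1/3) * codiff A x z) - (-(1/3) * codiff A x u) * ηb v z -
      (-(1/3) * codiff A x v) * ηb u z

/-- The interior contraction of a 1-form `ω` with a 2-form `G`:
`(i(ω)G)(z) = Σ η^{αβ} ω(e_α) G(e_β, z)`. -/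
noncomputable def icontr (ω : V4 → ℝ) (G : Mat4) (z : V4) : ℝ :=
  ∑ α, ∑ β, ηm α β * ω (e α) * bil G (e β) z

/-!
Contraction with a 2-form `G` acts on the components of a 1-form by `w ↦ -w Ĝ`. Every 2-form has
`Ĝ² - (*Ĝ)² = ½ tr(Ĝ²)` and `Ĝ (*Ĝ) = (*Ĝ) Ĝ = ¼ tr(Ĝ (*Ĝ))`, so for unitary `U` the definitions of
`Φ` and `Ψ` can be solved for the codifferentials:
`δU = i(Φ)U + i(Ψ)*U` and `δ*U = i(Φ)*U - i(Ψ)U`.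
By the Leibniz rule for `δ`, these are exactly the equations that make
`F = e^φ (cos ψ · U + sin ψ · *U)` coclosed as soon as `Dφ = Φ` and `Dψ = Ψ`. Since `** = -1`, the
dual `*F` arises from `F` by shifting `ψ` to `ψ + π/2`, which does not change `Dψ`, so the
equation `δ*F = 0` is another instance of `δF = 0`. The potentials come from the Poincaré lemma.
-/

section PoincareLemma

variable {E F : Type*} [NormedAddCommGroup E] [NormedSpace ℝ E] [FiniteDimensional ℝ E]
  [NormedAddCommGroup F] [NormedSpace ℝ F] [CompleteSpace F]

theorem exists_contDiff_fderiv_eq_of_closed {n : ℕ∞} (hn : 1 ≤ n) {Φ : E → E → F}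
    (hlin : ∀ x, IsLinearMap ℝ (Φ x)) (hsmooth : ∀ v, ContDiff ℝ n fun x => Φ x v)
    (hclosed : ∀ x u v, fderiv ℝ (fun y => Φ y v) x u = fderiv ℝ (fun y => Φ y u) x v) :
    ∃ φ : E → F, ContDiff ℝ (n + 1) φ ∧ ∀ x v, fderiv ℝ φ x v = Φ x v := by
  let ω : E → E →L[ℝ] F := fun x => LinearMap.toContinuousLinearMap ((hlin x).mk' (Φ x))
  have hω : ContDiff ℝ n ω := contDiff_clm_apply_iff.2 hsmooth
  have hωd : Differentiable ℝ ω := hω.differentiable (by simpa using (zero_lt_one.trans_le hn).ne')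
  have fderiv_ω (x u v : E) : fderiv ℝ ω x u v = fderiv ℝ (fun y => Φ y v) x u := by
    change _ = fderiv ℝ (fun y => ω y v) x u
    rw [fderiv_clm_apply (hωd x) (differentiableAt_const v)]
    simp
  obtain ⟨φ, hφ⟩ := convex_univ.exists_forall_hasFDerivAt_of_fderiv_symmetric isOpen_univ
    hωd.differentiableOn fun x _ u v => by rw [fderiv_ω, fderiv_ω, hclosed]
  have fderiv_φ : fderiv ℝ φ = ω := funext fun x => (hφ x trivial).fderiv
  refine ⟨φ, contDiff_succ_iff_fderiv.2 ⟨fun x => (hφ x trivial).differentiableAt, by simp, ?_⟩,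
    fun x v => by rw [fderiv_φ]; rfl⟩
  rwa [fderiv_φ]

end PoincareLemma

section HodgeDual

/-- The 2-form with electric part `a i = F₀ᵢ` and magnetic part `b = (F₂₃, F₃₁, F₁₂)`. In these
coordinates on 2-forms the Hodge dual is the exchange `(a, b) ↦ (b, -a)`. -/
def faraday (a b : Fin 3 → ℝ) : Mat4 :=
  !![0, a 0, a 1, a 2;
    -a 0, 0, b 2, -b 1;
    -a 1, -b 2, 0, b 0;
    -a 2, b 1, -b 0, 0]

theorem isTwoForm_faraday (a b : Fin 3 → ℝ) : IsTwoForm (faraday a b) := by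
  ext i j
  fin_cases i <;> fin_cases j <;> simp [faraday]

theorem neg_faraday (a b : Fin 3 → ℝ) : -faraday a b = faraday (-a) (-b) := by
  ext i j
  fin_cases i <;> fin_cases j <;> simp [faraday]

theorem IsTwoForm.exists_eq_faraday {F : Mat4} (hF : IsTwoForm F) : ∃ a b, F = faraday a b := by
  have skew (i j : Fin 4) : F j i = -F i j := congrFun (congrFun hF i) j
  have diag (i : Fin 4) : F i i = 0 := self_eq_neg.1 (skew i i)
  refine ⟨![F 0 1, F 0 2, F 0 3], ![F 2 3, F 3 1, F 1 2], ?_⟩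
  ext i j
  fin_cases i <;> fin_cases j <;>
    simp [faraday, diag, skew 0 1, skew 0 2, skew 0 3, skew 1 2, skew 1 3, skew 2 3]

theorem hodge_faraday (a b : Fin 3 → ℝ) : hodge (faraday a b) = faraday b (-a) := by
  ext i j
  fin_cases i <;> fin_cases j <;>
    simp [hodge, faraday, lc, ηm, Matrix.diagonal, Fin.sum_univ_four] <;> ring

theorem IsTwoForm.isTwoForm_hodge {F : Mat4} (hF : IsTwoForm F) : IsTwoForm (hodge F) := by
  obtain ⟨a, b, rfl⟩ := hF.exists_eq_faraday
  rw [hodge_faraday]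
  exact isTwoForm_faraday b (-a)

theorem IsTwoForm.hodge_hodge {F : Mat4} (hF : IsTwoForm F) : hodge (hodge F) = -F := by
  obtain ⟨a, b, rfl⟩ := hF.exists_eq_faraday
  rw [hodge_faraday, hodge_faraday, neg_faraday]

theorem hodge_add (A B : Mat4) : hodge (A + B) = hodge A + hodge B := by
  ext i j
  simp only [hodge, of_apply, Matrix.add_apply, mul_add, Finset.sum_add_distrib]

theorem hodge_smul (c : ℝ) (A : Mat4) : hodge (c • A) = c • hodge A := by
  ext i j
  simp only [hodge, of_apply, Matrix.smul_apply, smul_eq_mul, mul_left_comm _ c, ← Finset.mul_sum]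

end HodgeDual

section HatIdentities

theorem trace_hat_faraday_mul_hat_faraday (a b c d : Fin 3 → ℝ) :
    (hat (faraday a b) * hat (faraday c d)).trace = 2 * (a ⬝ᵥ c - b ⬝ᵥ d) := by
  simp [hat, ηm, faraday, trace, mul_apply, dotProduct, Fin.sum_univ_succ]
  ring

theorem hat_faraday_mul_hat_faraday_neg (a b : Fin 3 → ℝ) :
    hat (faraday a b) * hat (faraday b (-a)) = (a ⬝ᵥ b) • (1 : Mat4) := by
  ext i j
  fin_cases i <;> fin_cases j <;>
    simp [hat, ηm, faraday, mul_apply, dotProduct, Fin.sum_univ_succ] <;> ring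

theorem hat_faraday_sq_sub_hat_faraday_neg_sq (a b : Fin 3 → ℝ) :
    hat (faraday a b) * hat (faraday a b) - hat (faraday b (-a)) * hat (faraday b (-a)) =
      (a ⬝ᵥ a - b ⬝ᵥ b) • (1 : Mat4) := by
  ext i j
  fin_cases i <;> fin_cases j <;>
    simp [hat, ηm, faraday, mul_apply, dotProduct, Fin.sum_univ_succ] <;> ring

theorem IsTwoForm.hat_mul_hat_hodge {F : Mat4} (hF : IsTwoForm F) :
    hat F * hat (hodge F) = ((hat F * hat (hodge F)).trace / 4) • (1 : Mat4) := by
  obtain ⟨a, b, rfl⟩ := hF.exists_eq_faraday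
  rw [hodge_faraday, trace_hat_faraday_mul_hat_faraday, hat_faraday_mul_hat_faraday_neg,
    dotProduct_neg, dotProduct_comm b a]
  congr 1
  ring

theorem IsTwoForm.hat_sq_sub_hat_hodge_sq {F : Mat4} (hF : IsTwoForm F) :
    hat F * hat F - hat (hodge F) * hat (hodge F) =
      ((hat F * hat F).trace / 2) • (1 : Mat4) := by
  obtain ⟨a, b, rfl⟩ := hF.exists_eq_faraday
  rw [hodge_faraday, trace_hat_faraday_mul_hat_faraday, hat_faraday_sq_sub_hat_faraday_neg_sq]
  congr 1
  ring

theorem hat_neg (B : Mat4) : hat (-B) = -hat B := by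
  rw [hat, hat, transpose_neg, mul_neg]

theorem IsTwoForm.commute_hat_hat_hodge {F : Mat4} (hF : IsTwoForm F) :
    Commute (hat F) (hat (hodge F)) := by
  have h := hF.isTwoForm_hodge.hat_mul_hat_hodge
  rw [hF.hodge_hodge, hat_neg, mul_neg, trace_neg, neg_div, neg_smul, neg_inj, trace_mul_comm,
    ← hF.hat_mul_hat_hodge] at h
  exact h.symm

theorem IsUnitary.hat_mul_hat_hodge {U : Mat4} (hU : IsUnitary U) :
    hat U * hat (hodge U) = 0 := by
  rw [hU.1.hat_mul_hat_hodge, hU.2.2, zero_div, zero_smul]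

theorem IsUnitary.hat_hodge_mul_hat {U : Mat4} (hU : IsUnitary U) :
    hat (hodge U) * hat U = 0 := by
  rw [← hU.1.commute_hat_hat_hodge.eq, hU.hat_mul_hat_hodge]

theorem IsUnitary.hat_sq_sub_hat_hodge_sq {U : Mat4} (hU : IsUnitary U) :
    hat U * hat U - hat (hodge U) * hat (hodge U) = 1 := by
  rw [hU.1.hat_sq_sub_hat_hodge_sq, hU.2.1, div_self two_ne_zero, one_smul]

end HatIdentities

section InteriorContraction

theorem bil_e (B : Mat4) (β : Fin 4) (z : V4) : bil B (e β) z = (B *ᵥ z) β :=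
  single_one_dotProduct β (B *ᵥ z)

theorem dotProduct_comp_e (w : V4) : dotProduct w ∘ e = w :=
  funext fun α => dotProduct_single_one w α

theorem isLinearMap_dotProduct (w : V4) : IsLinearMap ℝ (dotProduct w) :=
  ⟨dotProduct_add w, fun c => dotProduct_smul c w⟩

theorem dotProduct_comp_e_of_isLinearMap {ω : V4 → ℝ} (hω : IsLinearMap ℝ ω) :
    dotProduct (ω ∘ e) = ω :=
  congrArg DFunLike.coe ((dotProductEquiv ℝ (Fin 4)).apply_symm_apply (hω.mk' ω))

theorem icontr_eq_dotProduct (ω : V4 → ℝ) (G : Mat4) :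
    icontr ω G = dotProduct ((ω ∘ e) ᵥ* (ηm * G)) := by
  funext z
  rw [← dotProduct_mulVec, ← mulVec_mulVec]
  simp only [icontr, bil_e, dotProduct, mulVec, Function.comp_apply, Finset.mul_sum, mul_left_comm,
    mul_assoc]

theorem isLinearMap_icontr (ω : V4 → ℝ) (G : Mat4) : IsLinearMap ℝ (icontr ω G) := by
  rw [icontr_eq_dotProduct]
  exact isLinearMap_dotProduct _

theorem icontr_neg_left (ω : V4 → ℝ) (G : Mat4) : icontr (-ω) G = -icontr ω G := by
  funext z
  simp only [icontr, Pi.neg_apply, mul_neg, neg_mul, Finset.sum_neg_distrib]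

theorem icontr_sub_left (ω ω' : V4 → ℝ) (G : Mat4) :
    icontr (ω - ω') G = icontr ω G - icontr ω' G := by
  funext z
  simp only [icontr, Pi.sub_apply, mul_sub, sub_mul, Finset.sum_sub_distrib]

theorem icontr_smul_left (c : ℝ) (ω : V4 → ℝ) (G : Mat4) :
    icontr (c • ω) G = c • icontr ω G := by
  funext z
  simp only [icontr, Pi.smul_apply, smul_eq_mul, mul_left_comm _ c, mul_assoc, Finset.mul_sum]

theorem bil_add (A B : Mat4) (y z : V4) : bil (A + B) y z = bil A y z + bil B y z := by
  rw [bil, add_mulVec, dotProduct_add, bil, bil]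

theorem bil_smul (c : ℝ) (B : Mat4) (y z : V4) : bil (c • B) y z = c * bil B y z := by
  rw [bil, smul_mulVec, dotProduct_smul, smul_eq_mul, bil]

theorem icontr_add_right (ω : V4 → ℝ) (G H : Mat4) :
    icontr ω (G + H) = icontr ω G + icontr ω H := by
  funext z
  simp only [icontr, Pi.add_apply, bil_add, mul_add, Finset.sum_add_distrib]

theorem icontr_smul_right (c : ℝ) (ω : V4 → ℝ) (G : Mat4) :
    icontr ω (c • G) = c • icontr ω G := by
  funext z
  simp only [icontr, Pi.smul_apply, smul_eq_mul, bil_smul, mul_left_comm _ c, Finset.mul_sum]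

theorem icontr_icontr (ω : V4 → ℝ) {G H : Mat4} (hG : IsTwoForm G) (hH : IsTwoForm H) :
    icontr (icontr ω G) H = dotProduct ((ω ∘ e) ᵥ* (hat G * hat H)) := by
  have ηm_mul {F : Mat4} (hF : IsTwoForm F) : ηm * F = -hat F := by
    rw [hat, hF, mul_neg, neg_neg]
  rw [icontr_eq_dotProduct, icontr_eq_dotProduct, dotProduct_comp_e, vecMul_vecMul, ηm_mul hG,
    ηm_mul hH, neg_mul_neg]

variable {U : Mat4}

theorem IsUnitary.icontr_icontr_hodge (hU : IsUnitary U) (ω : V4 → ℝ) :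
    icontr (icontr ω U) (hodge U) = 0 := by
  rw [icontr_icontr ω hU.1 hU.1.isTwoForm_hodge, hU.hat_mul_hat_hodge, vecMul_zero]
  exact funext zero_dotProduct

theorem IsUnitary.icontr_hodge_icontr (hU : IsUnitary U) (ω : V4 → ℝ) :
    icontr (icontr ω (hodge U)) U = 0 := by
  rw [icontr_icontr ω hU.1.isTwoForm_hodge hU.1, hU.hat_hodge_mul_hat, vecMul_zero]
  exact funext zero_dotProduct

theorem IsUnitary.icontr_icontr_sub_icontr_icontr_hodge (hU : IsUnitary U) {ω : V4 → ℝ}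
    (hω : IsLinearMap ℝ ω) :
    icontr (icontr ω U) U - icontr (icontr ω (hodge U)) (hodge U) = ω := by
  have hV := hU.1.isTwoForm_hodge
  calc icontr (icontr ω U) U - icontr (icontr ω (hodge U)) (hodge U)
      = dotProduct ((ω ∘ e) ᵥ* (hat U * hat U - hat (hodge U) * hat (hodge U))) := by
        rw [icontr_icontr ω hU.1 hU.1, icontr_icontr ω hV hV, vecMul_sub]
        exact funext fun z => (sub_dotProduct _ _ z).symm
    _ = ω := by
        rw [hU.hat_sq_sub_hat_hodge_sq, vecMul_one, dotProduct_comp_e_of_isLinearMap hω]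

end InteriorContraction

section Codifferential

variable {A B : V4 → Mat4} {f : V4 → ℝ} {x : V4}

theorem isLinearMap_codiff (A : V4 → Mat4) (x : V4) : IsLinearMap ℝ (codiff A x) where
  map_add y z := by
    simp only [codiff, bil, mulVec_add, dotProduct_add, mul_add, Finset.sum_add_distrib, neg_add]
  map_smul c z := by
    simp only [codiff, bil, mulVec_smul, dotProduct_smul, smul_eq_mul, mul_left_comm _ c,
      ← Finset.mul_sum, mul_neg]

theorem Dd_add (hA : ∀ i j, DifferentiableAt ℝ (fun y => A y i j) x)
    (hB : ∀ i j, DifferentiableAt ℝ (fun y => B y i j) x) (u : V4) :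
    Dd (fun y => A y + B y) x u = Dd A x u + Dd B x u := by
  ext i j
  simp only [Dd, of_apply, Matrix.add_apply, fderiv_fun_add (hA i j) (hB i j), _root_.add_apply]

theorem Dd_smul (hf : DifferentiableAt ℝ f x)
    (hA : ∀ i j, DifferentiableAt ℝ (fun y => A y i j) x) (u : V4) :
    Dd (fun y => f y • A y) x u = f x • Dd A x u + fderiv ℝ f x u • A x := by
  ext i j
  simp only [Dd, of_apply, Matrix.add_apply, Matrix.smul_apply, smul_eq_mul,
    fderiv_fun_mul hf (hA i j), _root_.add_apply, _root_.smul_apply, mul_comm (A x i j)]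

theorem codiff_add (hA : ∀ i j, DifferentiableAt ℝ (fun y => A y i j) x)
    (hB : ∀ i j, DifferentiableAt ℝ (fun y => B y i j) x) :
    codiff (fun y => A y + B y) x = codiff A x + codiff B x := by
  funext z
  simp only [codiff, Dd_add hA hB, bil_add, mul_add, Finset.sum_add_distrib, neg_add, Pi.add_apply]

theorem codiff_smul (hf : DifferentiableAt ℝ f x)
    (hA : ∀ i j, DifferentiableAt ℝ (fun y => A y i j) x) :
    codiff (fun y => f y • A y) x = f x • codiff A x - icontr (fderiv ℝ f x) (A x) := by
  funext z
  simp only [codiff, icontr, Dd_smul hf hA, bil_add, bil_smul, mul_add, Finset.sum_add_distrib,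
    mul_left_comm _ (f x), ← Finset.mul_sum, neg_add, Pi.sub_apply, Pi.smul_apply, smul_eq_mul,
    mul_neg, mul_assoc, sub_eq_add_neg]

end Codifferential

section Regularity

variable {n : WithTop ℕ∞} {U : V4 → Mat4}

theorem differentiableAt_hodge {x : V4} (hU : ∀ i j, DifferentiableAt ℝ (fun y => U y i j) x)
    (i j : Fin 4) : DifferentiableAt ℝ (fun y => hodge (U y) i j) x := by
  simp only [hodge, of_apply]
  fun_prop

theorem contDiff_hodge (hU : ∀ i j, ContDiff ℝ n fun x => U x i j) (i j : Fin 4) :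
    ContDiff ℝ n fun x => hodge (U x) i j := by
  simp only [hodge, of_apply]
  fun_prop

theorem contDiff_codiff (hU : ∀ i j, ContDiff ℝ (n + 1) fun x => U x i j) (z : V4) :
    ContDiff ℝ n fun x => codiff U x z := by
  have _ (i j : Fin 4) (u : V4) : ContDiff ℝ n fun x => fderiv ℝ (fun y => U y i j) x u :=
    ((hU i j).fderiv_right le_rfl).clm_apply contDiff_const
  simp only [codiff, bil_e, mulVec, dotProduct, Dd, of_apply]
  fun_prop

theorem contDiff_icontr {ω : V4 → V4 → ℝ} (hω : ∀ v, ContDiff ℝ n fun x => ω x v)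
    (hU : ∀ i j, ContDiff ℝ n fun x => U x i j) (z : V4) :
    ContDiff ℝ n fun x => icontr (ω x) (U x) z := by
  simp only [icontr, bil_e, mulVec, dotProduct]
  fun_prop

end Regularity

section RainichForms

variable {n : WithTop ℕ∞} {U : V4 → Mat4}

/-- Rainich's 1-form `Φ = i(δU)U - i(δ*U)*U`. For unitary `U` it is the logarithmic differential of
the amplitude `e^φ` of any source-free Maxwell field obtained from `U` by duality rotation. -/
noncomputable def amplitudeForm (U : V4 → Mat4) (x : V4) : V4 → ℝ :=
  icontr (codiff U x) (U x) - icontr (codiff (fun y => hodge (U y)) x) (hodge (U x))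

/-- Rainich's 1-form `Ψ = -i(δU)*U - i(δ*U)U`. For unitary `U` it is the differential of the
complexion `ψ` of any source-free Maxwell field obtained from `U` by duality rotation. -/
noncomputable def complexionForm (U : V4 → Mat4) (x : V4) : V4 → ℝ :=
  -icontr (codiff U x) (hodge (U x)) - icontr (codiff (fun y => hodge (U y)) x) (U x)

theorem isLinearMap_amplitudeForm (U : V4 → Mat4) (x : V4) : IsLinearMap ℝ (amplitudeForm U x) :=
  ((isLinearMap_icontr (codiff U x) (U x)).mk' _ -
    (isLinearMap_icontr (codiff (fun y => hodge (U y)) x) (hodge (U x))).mk' _).isLinear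

theorem isLinearMap_complexionForm (U : V4 → Mat4) (x : V4) : IsLinearMap ℝ (complexionForm U x) :=
  (-(isLinearMap_icontr (codiff U x) (hodge (U x))).mk' _ -
    (isLinearMap_icontr (codiff (fun y => hodge (U y)) x) (U x)).mk' _).isLinear

theorem contDiff_amplitudeForm (hU : ∀ i j, ContDiff ℝ (n + 1) fun x => U x i j) (v : V4) :
    ContDiff ℝ n fun x => amplitudeForm U x v :=
  have hV := contDiff_hodge hU
  (contDiff_icontr (contDiff_codiff hU) (fun i j => (hU i j).of_le le_self_add) v).sub
    (contDiff_icontr (contDiff_codiff hV) (fun i j => (hV i j).of_le le_self_add) v)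

theorem contDiff_complexionForm (hU : ∀ i j, ContDiff ℝ (n + 1) fun x => U x i j) (v : V4) :
    ContDiff ℝ n fun x => complexionForm U x v :=
  have hV := contDiff_hodge hU
  (contDiff_icontr (contDiff_codiff hU) (fun i j => (hV i j).of_le le_self_add) v).neg.sub
    (contDiff_icontr (contDiff_codiff hV) (fun i j => (hU i j).of_le le_self_add) v)

theorem IsUnitary.codiff_eq {x : V4} (hU : IsUnitary (U x)) :
    codiff U x = icontr (amplitudeForm U x) (U x) + icontr (complexionForm U x) (hodge (U x)) := by
  simp only [amplitudeForm, complexionForm, icontr_sub_left, icontr_neg_left,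
    hU.icontr_icontr_hodge, hU.icontr_hodge_icontr, sub_zero, ← sub_eq_add_neg,
    hU.icontr_icontr_sub_icontr_icontr_hodge (isLinearMap_codiff U x)]

theorem IsUnitary.codiff_hodge_eq {x : V4} (hU : IsUnitary (U x)) :
    codiff (fun y => hodge (U y)) x =
      icontr (amplitudeForm U x) (hodge (U x)) - icontr (complexionForm U x) (U x) := by
  simp only [amplitudeForm, complexionForm, icontr_sub_left, icontr_neg_left,
    hU.icontr_icontr_hodge, hU.icontr_hodge_icontr, neg_zero, zero_sub, sub_neg_eq_add,
    neg_add_eq_sub, hU.icontr_icontr_sub_icontr_icontr_hodge (isLinearMap_codiff _ x)]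

end RainichForms

section MaxwellianStructure

/-- The field `e^φ (cos ψ · G + sin ψ · *G)` obtained from `G` by a dilation of factor `e^φ` and a
duality rotation of angle `ψ`, the *complexion*. -/
noncomputable def dualityRotation (φ ψ : ℝ) (G : Mat4) : Mat4 :=
  exp φ • (cos ψ • G + sin ψ • hodge G)

theorem hodge_dualityRotation (φ ψ : ℝ) {G : Mat4} (hG : IsTwoForm G) :
    hodge (dualityRotation φ ψ G) = dualityRotation φ (ψ + π / 2) G := by
  rw [dualityRotation, dualityRotation, hodge_smul, hodge_add, hodge_smul, hodge_smul,
    hG.hodge_hodge, cos_add_pi_div_two, sin_add_pi_div_two, smul_neg, neg_smul, add_comm]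

theorem codiff_dualityRotation {φ ψ : V4 → ℝ} {G : V4 → Mat4} {x : V4}
    (hφ : DifferentiableAt ℝ φ x) (hψ : DifferentiableAt ℝ ψ x)
    (hG : ∀ i j, DifferentiableAt ℝ (fun y => G y i j) x) :
    codiff (fun y => dualityRotation (φ y) (ψ y) (G y)) x =
      exp (φ x) •
        (cos (ψ x) • (codiff G x -
            (icontr (fderiv ℝ φ x) (G x) + icontr (fderiv ℝ ψ x) (hodge (G x)))) +
          sin (ψ x) • (codiff (fun y => hodge (G y)) x -
            (icontr (fderiv ℝ φ x) (hodge (G x)) - icontr (fderiv ℝ ψ x) (G x)))) := by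
  have hG' := differentiableAt_hodge hG
  have hcos : ∀ i j, DifferentiableAt ℝ (fun y => (cos (ψ y) • G y) i j) x :=
    fun i j => hψ.cos.mul (hG i j)
  have hsin : ∀ i j, DifferentiableAt ℝ (fun y => (sin (ψ y) • hodge (G y)) i j) x :=
    fun i j => hψ.sin.mul (hG' i j)
  have hsum : ∀ i j, DifferentiableAt ℝ
      (fun y => (cos (ψ y) • G y + sin (ψ y) • hodge (G y)) i j) x :=
    fun i j => (hcos i j).add (hsin i j)
  simp only [dualityRotation]
  rw [codiff_smul hφ.exp hsum, codiff_add hcos hsin, codiff_smul hψ.cos hG, codiff_smul hψ.sin hG',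
    fderiv_exp hφ, fderiv_cos hψ, fderiv_sin hψ]
  simp only [FunLike.coe_smul, icontr_smul_left, icontr_smul_right, icontr_add_right]
  module

theorem codiff_dualityRotation_eq_zero {U : V4 → Mat4} {φ ψ : V4 → ℝ} {x : V4}
    (hU : IsUnitary (U x)) (hUd : ∀ i j, DifferentiableAt ℝ (fun y => U y i j) x)
    (hφ : DifferentiableAt ℝ φ x) (hψ : DifferentiableAt ℝ ψ x)
    (hdφ : ∀ z, fderiv ℝ φ x z = amplitudeForm U x z)
    (hdψ : ∀ z, fderiv ℝ ψ x z = complexionForm U x z) :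
    codiff (fun y => dualityRotation (φ y) (ψ y) (U y)) x = 0 := by
  rw [codiff_dualityRotation hφ hψ hUd, funext hdφ, funext hdψ, ← hU.codiff_eq,
    ← hU.codiff_hodge_eq]
  simp only [sub_self, smul_zero, add_zero]

end MaxwellianStructure

theorem stmt19_general {n : ℕ∞} (hn : 1 ≤ n) {U : V4 → Mat4} (hU : ∀ x, IsUnitary (U x))
    (hUsm : ∀ i j, ContDiff ℝ (n + 1) fun x => U x i j)
    (hclΦ : ∀ x u v, fderiv ℝ (fun y => amplitudeForm U y v) x u =
      fderiv ℝ (fun y => amplitudeForm U y u) x v)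
    (hclΨ : ∀ x u v, fderiv ℝ (fun y => complexionForm U y v) x u =
      fderiv ℝ (fun y => complexionForm U y u) x v) :
    (∃ φ ψ : V4 → ℝ, ContDiff ℝ (n + 1) φ ∧ ContDiff ℝ (n + 1) ψ ∧
      (∀ x z, fderiv ℝ φ x z = amplitudeForm U x z) ∧
      ∀ x z, fderiv ℝ ψ x z = complexionForm U x z) ∧
    ∀ φ ψ : V4 → ℝ, Differentiable ℝ φ → Differentiable ℝ ψ →
      (∀ x z, fderiv ℝ φ x z = amplitudeForm U x z) →
      (∀ x z, fderiv ℝ ψ x z = complexionForm U x z) →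
      ∀ x z, codiff (fun y => dualityRotation (φ y) (ψ y) (U y)) x z = 0 ∧
        codiff (fun y => hodge (dualityRotation (φ y) (ψ y) (U y))) x z = 0 := by
  constructor
  · obtain ⟨φ, hφ, hdφ⟩ := exists_contDiff_fderiv_eq_of_closed hn (isLinearMap_amplitudeForm U)
      (contDiff_amplitudeForm hUsm) hclΦ
    obtain ⟨ψ, hψ, hdψ⟩ := exists_contDiff_fderiv_eq_of_closed hn (isLinearMap_complexionForm U)
      (contDiff_complexionForm hUsm) hclΨ
    exact ⟨φ, ψ, hφ, hψ, hdφ, hdψ⟩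
  · intro φ ψ hφ hψ hdφ hdψ x z
    have hUd (i j : Fin 4) : DifferentiableAt ℝ (fun y => U y i j) x :=
      (hUsm i j).differentiable (by simp) x
    have codiff_eq_zero {χ : V4 → ℝ} (hχ : DifferentiableAt ℝ χ x)
        (hdχ : ∀ z, fderiv ℝ χ x z = complexionForm U x z) :
        codiff (fun y => dualityRotation (φ y) (χ y) (U y)) x z = 0 :=
      congrFun (codiff_dualityRotation_eq_zero (hU x) hUd (hφ x) hχ (hdφ x) hdχ) z
    refine ⟨codiff_eq_zero (hψ x) (hdψ x), ?_⟩
    simp only [hodge_dualityRotation _ _ (hU _).1]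
    exact codiff_eq_zero ((hψ x).add_const _) (by simpa only [fderiv_add_const] using hdψ x)

/-- Rainich's maxwellian structure theorem (flat case): if the 1-form fields
`Φ = i(δU)U - i(δ*U)*U` and `Ψ = -i(δU)*U - i(δ*U)U` of a smooth field of
unitary 2-forms on `ℝ⁴` are closed, then potentials `φ, ψ` with `Dφ = Φ`,
`Dψ = Ψ` exist, and for any such potentials `F = e^φ(cos ψ · U + sin ψ · *U)`
satisfies the source-free Maxwell equations. -/
theorem stmt19 (U : V4 → Mat4)
    (hUsk : ∀ x, (U x)ᵀ = -(U x))
    (hUun : ∀ x, (hat (U x) * hat (U x)).trace = 2 ∧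
      (hat (U x) * hat (hodge (U x))).trace = 0)
    (hUsm : ∀ i j, ContDiff ℝ (⊤ : ℕ∞) (fun x => U x i j))
    (Φ Ψ : V4 → V4 → ℝ)
    (hΦ : ∀ x z, Φ x z =
      icontr (codiff U x) (U x) z -
        icontr (codiff (fun y => hodge (U y)) x) (hodge (U x)) z)
    (hΨ : ∀ x z, Ψ x z =
      -icontr (codiff U x) (hodge (U x)) z -
        icontr (codiff (fun y => hodge (U y)) x) (U x) z)
    (hclΦ : ∀ x u v : V4, fderiv ℝ (fun y => Φ y v) x u =
      fderiv ℝ (fun y => Φ y u) x v)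
    (hclΨ : ∀ x u v : V4, fderiv ℝ (fun y => Ψ y v) x u =
      fderiv ℝ (fun y => Ψ y u) x v) :
    (∃ φ ψ : V4 → ℝ, ContDiff ℝ (⊤ : ℕ∞) φ ∧ ContDiff ℝ (⊤ : ℕ∞) ψ ∧
      (∀ x z, fderiv ℝ φ x z = Φ x z) ∧ (∀ x z, fderiv ℝ ψ x z = Ψ x z)) ∧
    ∀ φ ψ : V4 → ℝ, ContDiff ℝ (⊤ : ℕ∞) φ → ContDiff ℝ (⊤ : ℕ∞) ψ →
      (∀ x z, fderiv ℝ φ x z = Φ x z) → (∀ x z, fderiv ℝ ψ x z = Ψ x z) →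
      ∀ x z : V4,
        codiff (fun y => Real.exp (φ y) •
          (Real.cos (ψ y) • U y + Real.sin (ψ y) • hodge (U y))) x z = 0 ∧
        codiff (fun y => hodge (Real.exp (φ y) •
          (Real.cos (ψ y) • U y + Real.sin (ψ y) • hodge (U y)))) x z = 0 := by
  obtain rfl : Φ = amplitudeForm U := funext fun x => funext (hΦ x)
  obtain rfl : Ψ = complexionForm U := funext fun x => funext (hΨ x)
  have h := stmt19_general (n := ⊤) le_top (fun x => ⟨hUsk x, hUun x⟩) hUsm hclΦ hclΨ
  exact ⟨h.1, fun φ ψ hφ hψ => h.2 φ ψ (hφ.differentiable (by simp)) (hψ.differentiable (by simp))⟩
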